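/- Let Λ = ω₁ℤ + ω₂ℤ with ω₁ > 0 real, Im ω₂ > 0, and ω₁·Im ω₂ = π/2. Let α₁, …, α_N ∈ ℂ, β > 0, and let Π_𝛂 = π_{α₁}⋯π_{α_N} be the monic pseudopolynomial of degree N with roots α₁, …, α_N. Then its L^β quasi-norm over a fundamental domain D of Λ satisfies (π/2)·e^{NβA_Λ}·Θ_{N,β}(ℂ/Λ) ≤ ∫_D |Π_𝛂(z)|^β dA(z) ≤ (π/2)·e^{NβA_Λ}·E(βN, Λ). -/

import Mathlib

open MeasureTheory

/-- The lattice `Λ = ω₁ℤ + ω₂ℤ` as a subset of `ℂ`. -/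
def latticeSet (ω₁ ω₂ : ℂ) : Set ℂ :=
  {w : ℂ | ∃ m n : ℤ, w = (m : ℂ) * ω₁ + (n : ℂ) * ω₂}

/-- The Weierstrass sigma function of the lattice `ω₁ℤ + ω₂ℤ`. -/
noncomputable def wSigma (ω₁ ω₂ : ℂ) (z : ℂ) : ℂ :=
  z * ∏' p : {p : ℤ × ℤ // p ≠ 0},
      (1 - z / ((p.1.1 : ℂ) * ω₁ + (p.1.2 : ℂ) * ω₂)) *
        Complex.exp (z / ((p.1.1 : ℂ) * ω₁ + (p.1.2 : ℂ) * ω₂) +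
          z ^ 2 / (2 * ((p.1.1 : ℂ) * ω₁ + (p.1.2 : ℂ) * ω₂) ^ 2))

/-- The Weierstrass zeta function `ζ = σ'/σ`. -/
noncomputable def wZeta (ω₁ ω₂ : ℂ) (z : ℂ) : ℂ :=
  deriv (wSigma ω₁ ω₂) z / wSigma ω₁ ω₂ z

/-- The quasi-period `λ₁ = 2ζ(ω₁/2)`. -/
noncomputable def lambda1 (ω₁ ω₂ : ℂ) : ℂ := 2 * wZeta ω₁ ω₂ (ω₁ / 2)

/-- The constant `b = 1 − λ₁/(2ω₁)`. -/
noncomputable def bconst (ω₁ ω₂ : ℂ) : ℂ := 1 - lambda1 ω₁ ω₂ / (2 * ω₁)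

/-- The modified Weierstrass sigma function `σ_*(z) = e^{b z²} σ(z)`. -/
noncomputable def sigmaStar (ω₁ ω₂ : ℂ) (z : ℂ) : ℂ :=
  Complex.exp (bconst ω₁ ω₂ * z ^ 2) * wSigma ω₁ ω₂ z

/-- A fundamental domain of the lattice `ω₁ℤ + ω₂ℤ`. -/
def fundDomain (ω₁ ω₂ : ℂ) : Set ℂ :=
  (fun p : ℝ × ℝ => (p.1 : ℂ) * ω₁ + (p.2 : ℂ) * ω₂) ''
    (Set.Ico (0 : ℝ) 1 ×ˢ Set.Ico (0 : ℝ) 1)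

/-- The normalizing constant `A_Λ`. -/
noncomputable def Aconst (ω₁ ω₂ : ℂ) : ℝ :=
  2 / Real.pi * ∫ z in fundDomain ω₁ ω₂, (Real.log ‖sigmaStar ω₁ ω₂ z‖ - ‖z‖ ^ 2)

/-- The unipolar Green function of the torus `ℂ/Λ`. -/
noncomputable def Utorus (ω₁ ω₂ : ℂ) (z w : ℂ) : ℝ :=
  Real.log ‖sigmaStar ω₁ ω₂ (z - w)‖ - ‖z - w‖ ^ 2 - Aconst ω₁ ω₂

/-- The monic first degree pseudopolynomial on the torus with root `α`. -/
noncomputable def pseudoPoly (ω₁ ω₂ : ℂ) (α z : ℂ) : ℂ :=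
  Complex.exp (2 * Complex.I * ((((starRingEnd ℂ) α) * z).im : ℂ)) *
    (Complex.exp (-((‖z - α‖ ^ 2 : ℝ) : ℂ)) * sigmaStar ω₁ ω₂ (z - α))

/-- The torus packing number `Θ_{N,β}(ℂ/Λ)`. -/
noncomputable def ThetaTorus (ω₁ ω₂ : ℂ) (N : ℕ) (β : ℝ) : ℝ :=
  ⨅ w : Fin N → ℂ,
    2 / Real.pi *
      ∫ z in fundDomain ω₁ ω₂, Real.exp (∑ j, β * Utorus ω₁ ω₂ z (w j))

/-- The quantity `E(γ, Λ)`. -/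
noncomputable def Etorus (ω₁ ω₂ : ℂ) (γ : ℝ) : ℝ :=
  2 / Real.pi * ∫ z in fundDomain ω₁ ω₂, Real.exp (γ * Utorus ω₁ ω₂ z 0)

/-! Put `g z = |σ_*(z)| e^{-|z|²}`, so that `|π_α(z)| = g (z - α)` and, off a countable set,
`e^{γ U(z, w)} = e^{-γ A} g (z - w)^γ`. Up to the constant `e^{NβA}`, the integral of `|Π_𝛂|^β` is
then one of the integrals whose infimum is `Θ_{N,β}`. For the upper bound, the inequality of
arithmetic and geometric means replaces `∏ g (z - α_j)^β` by the average of the `g (z - α_j)^{Nβ}`;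
as `g` is `Λ`-periodic, each of these has the same integral over a fundamental domain.

Periodicity of `g` amounts to the quasi-periods of `σ`, including Legendre's relation. Summing the
Weierstrass product row by row turns every row into a sine, which exhibits `σ` as `e^{G₂ z² / 2}`
times a symmetric limit of products of sines. Translation by `1` changes each sine by a sign, while
translation by `τ` shifts the rows, so that only the extreme sines change; their quotient is
asymptotically an explicit exponential. -/

section CanonicalProduct

open Filter Topology Complex

/-- The genus two elementary factor with zero `w`, as in the Weierstrass product of `σ`.
For `w = 0` division by zero makes it the constant `1`. -/
noncomputable def weierstrassFactor (w z : ℂ) : ℂ :=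
  (1 - z / w) * exp (z / w + z ^ 2 / (2 * w ^ 2))

lemma weierstrassFactor_mul_mul {a : ℂ} (ha : a ≠ 0) (w z : ℂ) :
    weierstrassFactor (a * w) (a * z) = weierstrassFactor w z := by
  rw [weierstrassFactor, weierstrassFactor, mul_div_mul_left _ _ ha, mul_pow, mul_pow,
    mul_left_comm 2, mul_div_mul_left _ _ (pow_ne_zero 2 ha)]

lemma weierstrassFactor_neg_neg (w z : ℂ) :
    weierstrassFactor (-w) (-z) = weierstrassFactor w z := by
  simpa using weierstrassFactor_mul_mul (neg_ne_zero.2 one_ne_zero) w z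

lemma weierstrassFactor_ne_zero {w z : ℂ} (h : z ≠ w) : weierstrassFactor w z ≠ 0 := by
  refine mul_ne_zero (fun h0 => h ?_) (exp_ne_zero _)
  have h1 : z / w = 1 := (sub_eq_zero.1 h0).symm
  have hw : w ≠ 0 := by rintro rfl; simp at h1
  exact (div_eq_one_iff_eq hw).1 h1

lemma differentiable_weierstrassFactor (w : ℂ) : Differentiable ℂ (weierstrassFactor w) := by
  unfold weierstrassFactor
  simp only [div_eq_mul_inv]
  fun_prop

lemma norm_weierstrassFactor_sub_one_le {w z : ℂ} (h : ‖z / w‖ ≤ 1 / 2) :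
    ‖weierstrassFactor w z - 1‖ ≤ 2 * ‖z / w‖ ^ 3 := by
  set u := z / w with hu
  have hu1 : ‖-u‖ < 1 := by rw [norm_neg]; linarith
  have hne : 1 - u ≠ 0 := fun h0 => by
    rw [← sub_eq_zero.1 h0, norm_one] at h
    norm_num at h
  have htaylor : logTaylor (2 + 1) (-u) = -u - u ^ 2 / 2 := by
    simp [logTaylor, Finset.sum_range_succ]
    ring
  set δ := log (1 + -u) - logTaylor (2 + 1) (-u) with hδ
  have hexp : weierstrassFactor w z = exp δ := by
    rw [hδ, htaylor, sub_eq_add_neg, exp_add, ← sub_eq_add_neg, exp_log hne, weierstrassFactor,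
      ← hu, hu, div_pow]
    congr 2
    ring
  have hδ_le : ‖δ‖ ≤ ‖u‖ ^ 3 := by
    have hinv : (1 - ‖u‖)⁻¹ ≤ 2 := by
      rw [inv_le_comm₀ (by linarith) two_pos]
      linarith
    calc ‖δ‖ ≤ ‖-u‖ ^ (2 + 1) * (1 - ‖-u‖)⁻¹ / ((2 : ℕ) + 1) :=
          norm_log_sub_logTaylor_le 2 hu1
      _ ≤ ‖u‖ ^ 3 * 2 / ((2 : ℕ) + 1) := by rw [norm_neg]; gcongr
      _ ≤ ‖u‖ ^ 3 := by push_cast; linarith [pow_nonneg (norm_nonneg u) 3]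
  have hδ_one : ‖δ‖ ≤ 1 := hδ_le.trans (pow_le_one₀ (norm_nonneg u) (by linarith))
  rw [hexp]
  exact (norm_exp_sub_one_le hδ_one).trans (by linarith)

section Summable

variable {ι : Type*} {w : ι → ℂ}

lemma eventually_norm_weierstrassFactor_sub_one_le (hw : Summable fun i => ‖w i‖⁻¹ ^ 3)
    {R : ℝ} (hR : 0 < R) :
    ∀ᶠ i in cofinite, ∀ z ∈ Metric.ball (0 : ℂ) R,
      ‖weierstrassFactor (w i) z - 1‖ ≤ 2 * R ^ 3 * ‖w i‖⁻¹ ^ 3 := by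
  filter_upwards [hw.tendsto_cofinite_zero.eventually_le_const
    (show (0 : ℝ) < (2 * R)⁻¹ ^ 3 by positivity)] with i hi z hz
  have hwR : ‖w i‖⁻¹ ≤ (2 * R)⁻¹ :=
    le_of_pow_le_pow_left₀ three_ne_zero (by positivity) hi
  have hzw : ‖z / w i‖ ≤ R * ‖w i‖⁻¹ := by
    rw [norm_div, div_eq_mul_inv]
    gcongr
    exact (mem_ball_zero_iff.1 hz).le
  have hhalf : ‖z / w i‖ ≤ 1 / 2 := hzw.trans <| by
    calc R * ‖w i‖⁻¹ ≤ R * (2 * R)⁻¹ := by gcongr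
      _ = 1 / 2 := by field_simp
  calc ‖weierstrassFactor (w i) z - 1‖ ≤ 2 * ‖z / w i‖ ^ 3 :=
        norm_weierstrassFactor_sub_one_le hhalf
    _ ≤ 2 * (R * ‖w i‖⁻¹) ^ 3 := by gcongr
    _ = 2 * R ^ 3 * ‖w i‖⁻¹ ^ 3 := by ring

lemma summable_norm_weierstrassFactor_sub_one (hw : Summable fun i => ‖w i‖⁻¹ ^ 3) (z : ℂ) :
    Summable fun i => ‖weierstrassFactor (w i) z - 1‖ := by
  refine Summable.of_norm_bounded_eventually (hw.mul_left (2 * (‖z‖ + 1) ^ 3)) ?_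
  filter_upwards [eventually_norm_weierstrassFactor_sub_one_le hw
    (show 0 < ‖z‖ + 1 by positivity)] with i hi
  rw [norm_norm]
  exact hi z (by simp)

lemma multipliable_weierstrassFactor (hw : Summable fun i => ‖w i‖⁻¹ ^ 3) (z : ℂ) :
    Multipliable fun i => weierstrassFactor (w i) z := by
  simpa using multipliable_one_add_of_summable (summable_norm_weierstrassFactor_sub_one hw z)

lemma tprod_weierstrassFactor_ne_zero (hw : Summable fun i => ‖w i‖⁻¹ ^ 3) {z : ℂ}
    (hz : ∀ i, z ≠ w i) : ∏' i, weierstrassFactor (w i) z ≠ 0 := by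
  simpa using tprod_one_add_ne_zero_of_summable (f := fun i => weierstrassFactor (w i) z - 1)
    (fun i => by simpa using weierstrassFactor_ne_zero (hz i))
    (summable_norm_weierstrassFactor_sub_one hw z)

lemma differentiable_tprod_weierstrassFactor (hw : Summable fun i => ‖w i‖⁻¹ ^ 3) :
    Differentiable ℂ fun z => ∏' i, weierstrassFactor (w i) z := by
  intro z
  have hz : z ∈ Metric.ball (0 : ℂ) (‖z‖ + 1) := by simp
  have hprod := Summable.hasProdLocallyUniformlyOn_one_add Metric.isOpen_ball
    (hw.mul_left (2 * (‖z‖ + 1) ^ 3))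
    (eventually_norm_weierstrassFactor_sub_one_le hw (by positivity))
    fun i => ((differentiable_weierstrassFactor (w i)).sub_const 1).continuous.continuousOn
  simp only [add_sub_cancel] at hprod
  refine ((hasProdLocallyUniformlyOn_iff_tendstoLocallyUniformlyOn.1 hprod).differentiableOn
    (.of_forall fun s => ?_) Metric.isOpen_ball).differentiableAt (Metric.isOpen_ball.mem_nhds hz)
  exact (Differentiable.fun_finsetProd
    fun i _ => differentiable_weierstrassFactor (w i)).differentiableOn

end Summable

end CanonicalProduct

section Sigma

open Complex

/-- The lattice point with integral coordinates `p`; this indexing of the lattice turns the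
products over it into products over `ℤ × ℤ`. -/
def latticePoint (ω₁ ω₂ : ℂ) (p : ℤ × ℤ) : ℂ := p.1 * ω₁ + p.2 * ω₂

lemma range_latticePoint (ω₁ ω₂ : ℂ) : Set.range (latticePoint ω₁ ω₂) = latticeSet ω₁ ω₂ := by
  ext w
  simp [latticePoint, latticeSet, eq_comm]

lemma countable_latticeSet (ω₁ ω₂ : ℂ) : (latticeSet ω₁ ω₂).Countable := by
  rw [← range_latticePoint]
  exact Set.countable_range _

lemma summable_norm_latticePoint_inv_pow (L : PeriodPair) :
    Summable fun p => ‖latticePoint L.ω₁ L.ω₂ p‖⁻¹ ^ 3 := by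
  have hrank : Module.finrank ℤ L.lattice < 3 := by simp
  refine ((L.latticeEquivProd.symm.toEquiv.summable_iff).2
    (ZLattice.summable_norm_pow_inv L.lattice 3 hrank)).congr fun p => ?_
  simp [latticePoint, PeriodPair.latticeEquiv_symm_apply]

lemma wSigma_eq_mul_tprod (ω₁ ω₂ z : ℂ) :
    wSigma ω₁ ω₂ z = z * ∏' p, weierstrassFactor (latticePoint ω₁ ω₂ p) z := by
  rw [← tprod_subtype_eq_of_mulSupport_subset (s := {p | p ≠ 0})]
  · rfl
  · rintro p hp rfl
    simp [weierstrassFactor, latticePoint] at hp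

lemma wSigma_mul_mul_mul {a : ℂ} (ha : a ≠ 0) (ω₁ ω₂ z : ℂ) :
    wSigma (a * ω₁) (a * ω₂) (a * z) = a * wSigma ω₁ ω₂ z := by
  have hpoint (p : ℤ × ℤ) :
      latticePoint (a * ω₁) (a * ω₂) p = a * latticePoint ω₁ ω₂ p := by
    simp only [latticePoint]
    ring
  simp only [wSigma_eq_mul_tprod, hpoint, weierstrassFactor_mul_mul ha, mul_assoc]

lemma wSigma_neg (ω₁ ω₂ z : ℂ) : wSigma ω₁ ω₂ (-z) = -wSigma ω₁ ω₂ z := by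
  have hpoint (p : ℤ × ℤ) : latticePoint ω₁ ω₂ (Equiv.neg _ p) = -latticePoint ω₁ ω₂ p := by
    simp only [latticePoint, Equiv.neg_apply, Prod.fst_neg, Prod.snd_neg, Int.cast_neg]
    ring
  rw [wSigma_eq_mul_tprod, wSigma_eq_mul_tprod, ← (Equiv.neg (ℤ × ℤ)).tprod_eq, ← neg_mul]
  simp only [hpoint, weierstrassFactor_neg_neg]

variable (L : PeriodPair)

lemma differentiable_wSigma : Differentiable ℂ (wSigma L.ω₁ L.ω₂) := by
  simp only [funext (wSigma_eq_mul_tprod L.ω₁ L.ω₂)]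
  exact differentiable_id.mul
    (differentiable_tprod_weierstrassFactor (summable_norm_latticePoint_inv_pow L))

lemma wSigma_ne_zero {z : ℂ} (hz : z ∉ latticeSet L.ω₁ L.ω₂) : wSigma L.ω₁ L.ω₂ z ≠ 0 := by
  rw [← range_latticePoint] at hz
  have hz' (p : ℤ × ℤ) : z ≠ latticePoint L.ω₁ L.ω₂ p := fun h => hz ⟨p, h.symm⟩
  rw [wSigma_eq_mul_tprod]
  refine mul_ne_zero (by simpa [latticePoint] using hz' 0) ?_
  exact tprod_weierstrassFactor_ne_zero (summable_norm_latticePoint_inv_pow L) hz'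

lemma wSigma_half_period_ne_zero : wSigma L.ω₁ L.ω₂ (L.ω₁ / 2) ≠ 0 := by
  refine wSigma_ne_zero L fun ⟨m, n, h⟩ => L.ω₁_div_two_notMem_lattice ?_
  exact PeriodPair.mem_lattice.2 ⟨m, n, h.symm⟩

end Sigma

section SymmetricProducts

open Filter Topology Complex SummationFilter

@[to_additive]
lemma prod_Icc_neg_natCast {M : Type*} [CommMonoid M] (f : ℤ → M) (N : ℕ) :
    ∏ m ∈ Finset.Icc (-N : ℤ) N, f m =
      f 0 * ∏ j ∈ Finset.range N, f (j + 1) * f (-(j + 1)) := by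
  induction N with
  | zero => simp
  | succ N ih =>
    have hIcc : Finset.Icc (-(N + 1 : ℕ) : ℤ) (N + 1 : ℕ) =
        insert (N + 1 : ℤ) (insert (-(N + 1) : ℤ) (Finset.Icc (-N : ℤ) N)) := by
      ext m
      simp only [Finset.mem_Icc, Finset.mem_insert]
      lia
    rw [hIcc, Finset.prod_insert, Finset.prod_insert, ih, Finset.prod_range_succ]
    · ac_rfl
    all_goals
      simp only [Finset.mem_insert, Finset.mem_Icc]
      lia

lemma sum_Icc_neg_natCast_eq_zero_of_odd {f : ℤ → ℂ} (hf : f.Odd) (N : ℕ) :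
    ∑ m ∈ Finset.Icc (-N : ℤ) N, f m = 0 := by
  rw [sum_Icc_neg_natCast, Finset.sum_eq_zero fun j _ => by rw [hf, add_neg_cancel], add_zero]
  exact self_eq_neg.1 (by simpa using hf 0)

variable {x : ℂ}

lemma tendsto_prod_one_sub_sq_div (z : ℂ) :
    Tendsto (fun n : ℕ => z * ∏ j ∈ Finset.range n, (1 - z ^ 2 / ((j : ℂ) + 1) ^ 2)) atTop
      (𝓝 (sin (Real.pi * z) / Real.pi)) := by
  refine ((tendsto_euler_sin_prod z).div_const (Real.pi : ℂ)).congr fun n => ?_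
  rw [mul_assoc, mul_div_cancel_left₀ _ (ofReal_ne_zero.2 Real.pi_ne_zero)]

lemma hasProd_one_sub_div_add_int (hx : x ∈ integerComplement) (z : ℂ) :
    HasProd (fun m : ℤ => 1 - z / (x + m)) (sin (Real.pi * (x - z)) / sin (Real.pi * x))
      (symmetricIcc ℤ) := by
  have hpi : (Real.pi : ℂ) ≠ 0 := ofReal_ne_zero.2 Real.pi_ne_zero
  have hx0 := integerComplement.ne_zero hx
  have hlim := (tendsto_prod_one_sub_sq_div (x - z)).div (tendsto_prod_one_sub_sq_div x)
    (div_ne_zero (sin_pi_mul_ne_zero hx) hpi)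
  rw [div_div_div_cancel_right₀ hpi] at hlim
  refine hasProd_symmetricIcc_iff.2 (hlim.congr fun N => ?_)
  rw [prod_Icc_neg_natCast, Pi.div_apply, mul_div_mul_comm, ← Finset.prod_div_distrib]
  congr 1
  · rw [Int.cast_zero, add_zero, one_sub_div hx0]
  · refine Finset.prod_congr rfl fun j _ => ?_
    have hj : (j : ℂ) + 1 ≠ 0 := Nat.cast_add_one_ne_zero j
    have hadd : x + (j + 1) ≠ 0 := by simpa using integerComplement_add_ne_zero hx (j + 1)
    have hsub : x - (j + 1) ≠ 0 := by
      simpa [← sub_eq_add_neg, -neg_add_rev] using integerComplement_add_ne_zero hx (-(j + 1))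
    push_cast
    rw [← sub_eq_add_neg, one_sub_div hadd, one_sub_div hsub, one_sub_div (pow_ne_zero 2 hj),
      one_sub_div (pow_ne_zero 2 hj), div_div_div_cancel_right₀ (pow_ne_zero 2 hj), sq_sub_sq,
      sq_sub_sq, div_mul_div_comm, ← neg_div_neg_eq]
    congr 1 <;> ring

lemma hasSum_inv_add_int (hx : x ∈ integerComplement) :
    HasSum (fun m : ℤ => 1 / (x + m)) (Real.pi * cot (Real.pi * x)) (symmetricIcc ℤ) := by
  have hlim := (tendsto_logDeriv_euler_cot_sub hx).const_add (1 / x)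
  rw [add_sub_cancel] at hlim
  refine hasSum_symmetricIcc_iff.2 (hlim.congr fun N => ?_)
  rw [sum_Icc_neg_natCast, Int.cast_zero, add_zero]
  congr 1
  refine Finset.sum_congr rfl fun j _ => ?_
  push_cast
  rw [cotTerm, ← sub_eq_add_neg, add_comm]

lemma summable_inv_add_int_sq (x : ℂ) : Summable fun m : ℤ => 1 / (x + m) ^ 2 := by
  refine (EisensteinSeries.linear_right_summable x 1 le_rfl).congr fun m => ?_
  rw [Int.cast_one, one_mul, one_div, zpow_ofNat]

lemma summable_norm_add_int_inv_pow (x : ℂ) : Summable fun m : ℤ => ‖x + m‖⁻¹ ^ 3 := by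
  refine (EisensteinSeries.linear_right_summable x 1 (k := 3) (by norm_num)).norm.congr fun m => ?_
  rw [Int.cast_one, one_mul, zpow_ofNat, norm_inv, norm_pow, inv_pow]

lemma prod_weierstrassFactor {ι : Type*} (s : Finset ι) (w : ι → ℂ) (z : ℂ) :
    ∏ i ∈ s, weierstrassFactor (w i) z = (∏ i ∈ s, (1 - z / w i)) *
      exp (z * ∑ i ∈ s, 1 / w i + z ^ 2 / 2 * ∑ i ∈ s, 1 / w i ^ 2) := by
  simp only [weierstrassFactor]
  rw [Finset.prod_mul_distrib, ← exp_sum, Finset.mul_sum, Finset.mul_sum,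
    ← Finset.sum_add_distrib]
  congr 2
  refine Finset.sum_congr rfl fun i _ => ?_
  rw [mul_one_div, div_mul_div_comm, mul_one]

lemma tprod_weierstrassFactor_add_int (hx : x ∈ integerComplement) (z : ℂ) :
    ∏' m : ℤ, weierstrassFactor (x + m) z = sin (Real.pi * (x - z)) / sin (Real.pi * x) *
      exp (z * (Real.pi * cot (Real.pi * x)) + z ^ 2 / 2 * ∑' m : ℤ, 1 / (x + m) ^ 2) := by
  have hprod := (multipliable_weierstrassFactor
    (summable_norm_add_int_inv_pow x) z).hasProd.mono_left (symmetricIcc ℤ).le_atTop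
  have hsq := (summable_inv_add_int_sq x).hasSum.mono_left (symmetricIcc ℤ).le_atTop
  refine tendsto_nhds_unique (hasProd_symmetricIcc_iff.1 hprod) ?_
  simp only [prod_weierstrassFactor]
  refine (hasProd_symmetricIcc_iff.1 (hasProd_one_sub_div_add_int hx z)).mul (.cexp ?_)
  exact ((hasSum_symmetricIcc_iff.1 (hasSum_inv_add_int hx)).const_mul z).add
    ((hasSum_symmetricIcc_iff.1 hsq).const_mul _)

lemma mul_tprod_weierstrassFactor_int (z : ℂ) :
    z * ∏' m : ℤ, weierstrassFactor m z =
      sin (Real.pi * z) / Real.pi * exp (z ^ 2 / 2 * ∑' m : ℤ, 1 / (m : ℂ) ^ 2) := by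
  have hprod := (multipliable_weierstrassFactor (w := fun m : ℤ => (m : ℂ))
    (by simpa using summable_norm_add_int_inv_pow 0) z).hasProd.mono_left (symmetricIcc ℤ).le_atTop
  have hsum : Summable fun m : ℤ => 1 / (m : ℂ) ^ 2 := by simpa using summable_inv_add_int_sq 0
  have hsq := hsum.hasSum.mono_left (symmetricIcc ℤ).le_atTop
  refine tendsto_nhds_unique ((hasProd_symmetricIcc_iff.1 hprod).const_mul z) ?_
  refine ((tendsto_prod_one_sub_sq_div z).mul
    (((hasSum_symmetricIcc_iff.1 hsq).const_mul (z ^ 2 / 2)).cexp)).congr fun N => ?_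
  have hodd : Function.Odd fun m : ℤ => 1 / (m : ℂ) := fun m => by simp
  rw [prod_weierstrassFactor, sum_Icc_neg_natCast_eq_zero_of_odd hodd, mul_zero, zero_add,
    ← mul_assoc, prod_Icc_neg_natCast (fun m : ℤ => 1 - z / m), Int.cast_zero, div_zero, sub_zero,
    one_mul]
  congr 2
  refine Finset.prod_congr rfl fun j _ => ?_
  push_cast
  rw [div_neg, sub_neg_eq_add, ← div_pow]
  ring

end SymmetricProducts

section SineProduct

open Filter Topology Complex SummationFilter EisensteinSeries
open UpperHalfPlane hiding I

lemma linearIndependent_pair_of_im_div_ne_zero {ω₁ ω₂ : ℂ} (h : (ω₂ / ω₁).im ≠ 0) :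
    LinearIndependent ℝ ![ω₁, ω₂] := by
  have hω₁ : ω₁ ≠ 0 := fun h0 => h (by simp [h0])
  refine (LinearIndependent.pair_iff' hω₁).2 fun a ha => h ?_
  rw [← ha, real_smul, mul_div_cancel_right₀ _ hω₁, ofReal_im]

lemma intCast_mul_coe_mem_integerComplement (τ : ℍ) {n : ℤ} (hn : n ≠ 0) :
    (n * τ : ℂ) ∈ integerComplement := by
  rintro ⟨m, hm⟩
  have him := congrArg Complex.im hm
  rw [intCast_im, ← ofReal_intCast, im_ofReal_mul, coe_im, zero_eq_mul] at him
  exact him.elim (Int.cast_ne_zero.2 hn) τ.im_ne_zero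

lemma e2Summand_eq_tsum_one_div_sq (n : ℤ) (τ : ℍ) :
    e2Summand n τ = ∑' m : ℤ, 1 / (n * τ + m : ℂ) ^ 2 := by
  refine tsum_congr fun m => ?_
  simp [eisSummand, zpow_neg]

lemma tendsto_sum_e2Summand (τ : ℍ) :
    Tendsto (fun N : ℕ => ∑ n ∈ Finset.Icc (-N : ℤ) N, e2Summand n τ) atTop (𝓝 (G2 τ)) :=
  hasSum_symmetricIcc_iff.1 (summable_e2Summand_symmetricIcc τ).hasSum

/-- The constant in front of the sine into which the `n`-th row `n * τ + ℤ` of the Weierstrass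
product sums up. The row `n = 0` also takes the factor `z` in front of the product. -/
noncomputable def rowCoeff (τ : ℍ) (n : ℤ) : ℂ :=
  if n = 0 then -1 / Real.pi else 1 / sin (Real.pi * (n * τ))

lemma ite_mul_tprod_row (τ : ℍ) (n : ℤ) (z : ℂ) :
    (if n = 0 then z else 1) * ∏' m : ℤ, weierstrassFactor (latticePoint 1 τ (m, n)) z =
      rowCoeff τ n * sin (Real.pi * (n * τ - z)) *
        exp (z * (Real.pi * cot (Real.pi * (n * τ))) + z ^ 2 / 2 * e2Summand n τ) := by
  have hpoint (m : ℤ) : latticePoint 1 τ (m, n) = n * τ + m := by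
    simp only [latticePoint, mul_one, add_comm]
  simp only [hpoint, rowCoeff, e2Summand_eq_tsum_one_div_sq]
  split_ifs with hn
  · simp only [hn, Int.cast_zero, zero_mul, zero_add, zero_sub, mul_zero,
      cot_eq_cos_div_sin, sin_zero, div_zero, mul_neg, sin_neg, mul_tprod_weierstrassFactor_int]
    ring
  · rw [tprod_weierstrassFactor_add_int (intCast_mul_coe_mem_integerComplement τ hn)]
    ring

/-- The product of the rows `-N, …, N` of the Weierstrass product of `ℤ + ℤτ`, each row being
summed up into a sine. -/
noncomputable def sineProduct (τ : ℍ) (N : ℕ) (z : ℂ) : ℂ :=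
  (∏ n ∈ Finset.Icc (-N : ℤ) N, rowCoeff τ n * sin (Real.pi * (n * τ - z))) *
    exp (z ^ 2 / 2 * ∑ n ∈ Finset.Icc (-N : ℤ) N, e2Summand n τ)

lemma mul_prod_tprod_row (τ : ℍ) (N : ℕ) (z : ℂ) :
    z * ∏ n ∈ Finset.Icc (-N : ℤ) N, ∏' m : ℤ, weierstrassFactor (latticePoint 1 τ (m, n)) z =
      sineProduct τ N z := by
  have hz : ∏ n ∈ Finset.Icc (-N : ℤ) N, (if n = 0 then z else 1) = z := by
    rw [Finset.prod_ite_eq', if_pos (by simp)]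
  have hodd : Function.Odd fun n : ℤ => z * (Real.pi * cot (Real.pi * (n * τ))) := fun n => by
    simp only [Int.cast_neg, neg_mul, mul_neg, cot_eq_cos_div_sin, cos_neg, sin_neg, div_neg]
  nth_rw 1 [← hz]
  rw [← Finset.prod_mul_distrib, Finset.prod_congr rfl fun n _ => ite_mul_tprod_row τ n z,
    Finset.prod_mul_distrib, ← exp_sum, Finset.sum_add_distrib,
    sum_Icc_neg_natCast_eq_zero_of_odd hodd, zero_add, ← Finset.mul_sum, sineProduct]

lemma tendsto_sineProduct (τ : ℍ) (z : ℂ) :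
    Tendsto (fun N => sineProduct τ N z) atTop (𝓝 (wSigma 1 τ z)) := by
  have hsum := summable_norm_latticePoint_inv_pow
    ⟨1, τ, linearIndependent_pair_of_im_div_ne_zero (by simpa using τ.im_ne_zero)⟩
  have hrow (n : ℤ) := (multipliable_weierstrassFactor
    (hsum.comp_injective (Prod.mk_left_injective n)) z).hasProd
  have hprod := ((Equiv.prodComm ℤ ℤ).hasProd_iff.2
    (multipliable_weierstrassFactor hsum z).hasProd).prod_fiberwise hrow
  have hlim := (hasProd_symmetricIcc_iff.1
    (hprod.mono_left (symmetricIcc ℤ).le_atTop)).const_mul z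
  rw [wSigma_eq_mul_tprod]
  exact hlim.congr (mul_prod_tprod_row τ · z)

lemma sineProduct_add_one (τ : ℍ) (N : ℕ) (z : ℂ) :
    sineProduct τ N (z + 1) =
      -exp ((∑ n ∈ Finset.Icc (-N : ℤ) N, e2Summand n τ) * (z + 1 / 2)) * sineProduct τ N z := by
  have hsin (n : ℤ) :
      sin (Real.pi * (n * τ - (z + 1))) = -1 * sin (Real.pi * (n * τ - z)) := by
    rw [neg_one_mul, ← sin_sub_pi]
    congr 1
    ring
  have hcard : Odd (Finset.Icc (-N : ℤ) N).card := by
    rw [Int.card_Icc]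
    exact ⟨N, by lia⟩
  have hexp (S : ℂ) : (z + 1) ^ 2 / 2 * S = S * (z + 1 / 2) + z ^ 2 / 2 * S := by ring
  simp only [sineProduct, hsin, mul_left_comm _ (-1 : ℂ), hexp, exp_add]
  rw [Finset.prod_mul_distrib, Finset.prod_const, hcard.neg_one_pow]
  ring

theorem wSigma_one_add_one (τ : ℍ) (z : ℂ) :
    wSigma 1 τ (z + 1) = -exp (G2 τ * (z + 1 / 2)) * wSigma 1 τ z := by
  refine tendsto_nhds_unique (tendsto_sineProduct τ (z + 1)) ?_
  simp only [sineProduct_add_one]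
  exact ((tendsto_sum_e2Summand τ).mul_const _).cexp.neg.mul (tendsto_sineProduct τ z)

lemma prod_Icc_sub_one_mul {M : Type*} [CommMonoid M] (f : ℤ → M) (N : ℕ) :
    (∏ n ∈ Finset.Icc (-N : ℤ) N, f (n - 1)) * f N =
      (∏ n ∈ Finset.Icc (-N : ℤ) N, f n) * f (-N - 1) := by
  have hshift : ∏ n ∈ Finset.Icc (-N : ℤ) N, f (n - 1) =
      ∏ n ∈ Finset.Icc (-N - 1 : ℤ) (N - 1), f n := by
    have hmap := Finset.map_add_right_Icc (-N - 1 : ℤ) (N - 1) 1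
    rw [sub_add_cancel, sub_add_cancel] at hmap
    rw [← hmap, Finset.prod_map]
    simp
  rw [hshift, mul_comm, ← Finset.prod_insert (by simp),
    Finset.insert_Icc_sub_one_right_eq_Icc (by lia),
    ← Finset.insert_Icc_add_one_left_eq_Icc (by lia), sub_add_cancel,
    Finset.prod_insert (by simp), mul_comm]

lemma sineProduct_add_coe_mul_sin (τ : ℍ) (N : ℕ) (z : ℂ) :
    sineProduct τ N (z + τ) * sin (Real.pi * (N * τ - z)) =
      exp ((∑ n ∈ Finset.Icc (-N : ℤ) N, e2Summand n τ) * τ * (z + τ / 2)) * sineProduct τ N z *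
        -sin (Real.pi * (N * τ - (-z - τ))) := by
  have hsin := prod_Icc_sub_one_mul (fun n : ℤ => sin (Real.pi * (n * τ - z))) N
  have hexp (S : ℂ) : (z + τ) ^ 2 / 2 * S = S * τ * (z + τ / 2) + z ^ 2 / 2 * S := by ring
  have hshift (n : ℤ) : ((n - 1 : ℤ) : ℂ) * τ - z = n * τ - (z + τ) := by push_cast; ring
  have hneg : Real.pi * (((-N : ℤ) : ℂ) * τ - (z + τ)) = -(Real.pi * (N * τ - (-z - τ))) := by
    push_cast
    ring
  simp only [hshift, hneg, sin_neg, Int.cast_natCast] at hsin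
  simp only [sineProduct, hexp, exp_add, Finset.prod_mul_distrib]
  linear_combination (∏ n ∈ Finset.Icc (-N : ℤ) N, rowCoeff τ n) *
    exp ((∑ n ∈ Finset.Icc (-N : ℤ) N, e2Summand n τ) * τ * (z + τ / 2)) *
    exp (z ^ 2 / 2 * ∑ n ∈ Finset.Icc (-N : ℤ) N, e2Summand n τ) * hsin

lemma tendsto_exp_mul_sin (τ : ℍ) (z : ℂ) :
    Tendsto (fun N : ℕ => exp (Real.pi * I * τ * N) * sin (Real.pi * (N * τ - z))) atTop
      (𝓝 (I / 2 * exp (Real.pi * I * z))) := by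
  have hq : Tendsto (fun N : ℕ => exp (2 * Real.pi * I * τ) ^ N) atTop (𝓝 0) :=
    tendsto_pow_atTop_nhds_zero_of_norm_lt_one (norm_exp_two_pi_I_lt_one τ)
  have hlim := ((hq.mul_const (exp (-(Real.pi * I * z)))).const_sub
    (exp (Real.pi * I * z))).const_mul (I / 2)
  rw [zero_mul, sub_zero] at hlim
  refine hlim.congr fun N => ?_
  have hneg : exp (Real.pi * I * τ * N) * exp (-(Real.pi * (N * τ - z)) * I) =
      exp (Real.pi * I * z) := by
    rw [← exp_add]
    congr 1
    ring
  have hpos : exp (Real.pi * I * τ * N) * exp (Real.pi * (N * τ - z) * I) =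
      exp (N * (2 * Real.pi * I * τ)) * exp (-(Real.pi * I * z)) := by
    rw [← exp_add, ← exp_add]
    congr 1
    ring
  rw [sin, ← exp_nat_mul]
  linear_combination I / 2 * (hpos - hneg)

theorem wSigma_one_add_coe (τ : ℍ) (z : ℂ) :
    wSigma 1 τ (z + τ) = -exp ((G2 τ * τ - 2 * Real.pi * I) * (z + τ / 2)) * wSigma 1 τ z := by
  have hlim := (((((tendsto_sum_e2Summand τ).mul_const (τ : ℂ)).mul_const (z + τ / 2)).cexp.mul
    (tendsto_sineProduct τ z)).mul (tendsto_exp_mul_sin τ (-z - τ)).neg)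
  have hboundary : wSigma 1 τ (z + τ) * (I / 2 * exp (Real.pi * I * z)) =
      exp (G2 τ * τ * (z + τ / 2)) * wSigma 1 τ z * -(I / 2 * exp (Real.pi * I * (-z - τ))) := by
    refine tendsto_nhds_unique ((tendsto_sineProduct τ (z + τ)).mul (tendsto_exp_mul_sin τ z))
      (hlim.congr fun N => ?_)
    linear_combination -exp (Real.pi * I * τ * N) * sineProduct_add_coe_mul_sin τ N z
  have hexp : exp ((G2 τ * τ - 2 * Real.pi * I) * (z + τ / 2)) * exp (Real.pi * I * z) =
      exp (G2 τ * τ * (z + τ / 2)) * exp (Real.pi * I * (-z - τ)) := by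
    rw [← exp_add, ← exp_add]
    congr 1
    ring
  refine mul_right_cancel₀ (mul_ne_zero (by simp) (exp_ne_zero (Real.pi * I * z)))
    (hboundary.trans ?_)
  linear_combination (I / 2 * wSigma 1 τ z) * hexp

end SineProduct

section QuasiPeriods

open Complex

/- Differentiate the functional equation at `-a / 2`, which the translation sends to `a / 2`. -/
lemma two_mul_logDeriv_half_of_odd {f : ℂ → ℂ} (hf : Differentiable ℂ f) (hodd : f.Odd)
    {a c : ℂ} (hshift : ∀ z, f (z + a) = -exp (c * (z + a / 2)) * f z) (hne : f (a / 2) ≠ 0) :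
    2 * logDeriv f (a / 2) = c := by
  have heven : deriv f (-(a / 2)) = deriv f (a / 2) := by
    have h := deriv_comp_neg f (a / 2)
    rw [funext hodd, deriv.fun_neg] at h
    exact (neg_injective h).symm
  have hleft : HasDerivAt (fun z => f (z + a)) (deriv f (a / 2)) (-(a / 2)) := by
    have ha : -(a / 2) + a = a / 2 := by ring
    simpa only [ha] using (hf (-(a / 2) + a)).hasDerivAt.comp_add_const (-(a / 2)) a
  have hright : HasDerivAt (fun z => -exp (c * (z + a / 2)) * f z)
      (c * f (a / 2) - deriv f (a / 2)) (-(a / 2)) := by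
    have hexp : HasDerivAt (fun z => -exp (c * (z + a / 2))) (-c) (-(a / 2)) := by
      simpa using ((((hasDerivAt_id (-(a / 2))).add_const (a / 2)).const_mul c).cexp).fun_neg
    refine (hexp.mul (hf _).hasDerivAt).congr_deriv ?_
    rw [hodd, heven, neg_add_cancel, mul_zero, exp_zero]
    ring
  have hderiv := hleft.unique (by rwa [funext hshift])
  rw [logDeriv_apply, ← mul_div_assoc, div_eq_iff hne]
  linear_combination hderiv

variable {ω₁ ω₂ : ℂ}

lemma wSigma_eq_mul_wSigma_one (hω₁ : ω₁ ≠ 0) (ω₂ z : ℂ) :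
    wSigma ω₁ ω₂ z = ω₁ * wSigma 1 (ω₂ / ω₁) (z / ω₁) := by
  rw [← wSigma_mul_mul_mul hω₁, mul_one, mul_div_cancel₀ _ hω₁, mul_div_cancel₀ _ hω₁]

lemma ne_zero_of_im_div_ne_zero (h : (ω₂ / ω₁).im ≠ 0) : ω₁ ≠ 0 := by
  rintro rfl
  simp at h

lemma wSigma_add_left_G2 (h : 0 < (ω₂ / ω₁).im) (z : ℂ) :
    wSigma ω₁ ω₂ (z + ω₁) =
      -exp (EisensteinSeries.G2 ⟨ω₂ / ω₁, h⟩ / ω₁ * (z + ω₁ / 2)) * wSigma ω₁ ω₂ z := by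
  have hω₁ : ω₁ ≠ 0 := ne_zero_of_im_div_ne_zero h.ne'
  rw [wSigma_eq_mul_wSigma_one hω₁, wSigma_eq_mul_wSigma_one hω₁, add_div, div_self hω₁,
    wSigma_one_add_one ⟨ω₂ / ω₁, h⟩]
  have hexp (S : ℂ) : S * (z / ω₁ + 1 / 2) = S / ω₁ * (z + ω₁ / 2) := by field
  simp only [hexp, mul_left_comm]

lemma lambda1_eq_G2_div (h : 0 < (ω₂ / ω₁).im) :
    lambda1 ω₁ ω₂ = EisensteinSeries.G2 ⟨ω₂ / ω₁, h⟩ / ω₁ := by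
  let L : PeriodPair := ⟨ω₁, ω₂, linearIndependent_pair_of_im_div_ne_zero h.ne'⟩
  exact two_mul_logDeriv_half_of_odd (differentiable_wSigma L) (wSigma_neg ω₁ ω₂)
    (wSigma_add_left_G2 h) (wSigma_half_period_ne_zero L)

theorem wSigma_add_left (h : 0 < (ω₂ / ω₁).im) (z : ℂ) :
    wSigma ω₁ ω₂ (z + ω₁) = -exp (lambda1 ω₁ ω₂ * (z + ω₁ / 2)) * wSigma ω₁ ω₂ z := by
  rw [wSigma_add_left_G2 h, lambda1_eq_G2_div h]

theorem wSigma_add_right (h : 0 < (ω₂ / ω₁).im) (z : ℂ) :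
    wSigma ω₁ ω₂ (z + ω₂) =
      -exp ((lambda1 ω₁ ω₂ * ω₂ - 2 * Real.pi * I) / ω₁ * (z + ω₂ / 2)) * wSigma ω₁ ω₂ z := by
  have hω₁ : ω₁ ≠ 0 := ne_zero_of_im_div_ne_zero h.ne'
  rw [wSigma_eq_mul_wSigma_one hω₁, wSigma_eq_mul_wSigma_one hω₁, add_div,
    wSigma_one_add_coe ⟨ω₂ / ω₁, h⟩, lambda1_eq_G2_div h]
  have hexp (S : ℂ) : (S * (ω₂ / ω₁) - 2 * Real.pi * I) * (z / ω₁ + ω₂ / ω₁ / 2) =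
      (S / ω₁ * ω₂ - 2 * Real.pi * I) / ω₁ * (z + ω₂ / 2) := by field
  simp only [hexp, mul_left_comm]

end QuasiPeriods

section SigmaModulus

open Complex ComplexConjugate

lemma sigmaStar_add_left {ω₁ ω₂ : ℂ} (h : 0 < (ω₂ / ω₁).im) (z : ℂ) :
    sigmaStar ω₁ ω₂ (z + ω₁) = -exp (ω₁ * (2 * z + ω₁)) * sigmaStar ω₁ ω₂ z := by
  have hω₁ : ω₁ ≠ 0 := ne_zero_of_im_div_ne_zero h.ne'
  have hexp : exp (bconst ω₁ ω₂ * (z + ω₁) ^ 2) * exp (lambda1 ω₁ ω₂ * (z + ω₁ / 2)) =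
      exp (ω₁ * (2 * z + ω₁)) * exp (bconst ω₁ ω₂ * z ^ 2) := by
    rw [← exp_add, ← exp_add, bconst]
    congr 1
    field
  simp only [sigmaStar, wSigma_add_left h]
  linear_combination -wSigma ω₁ ω₂ z * hexp

lemma sigmaStar_add_right {ω₁ ω₂ : ℂ} (h : 0 < (ω₂ / ω₁).im) (z : ℂ) :
    sigmaStar ω₁ ω₂ (z + ω₂) =
      -exp ((ω₂ - Real.pi * I / ω₁) * (2 * z + ω₂)) * sigmaStar ω₁ ω₂ z := by
  have hω₁ : ω₁ ≠ 0 := ne_zero_of_im_div_ne_zero h.ne'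
  have hexp : exp (bconst ω₁ ω₂ * (z + ω₂) ^ 2) *
        exp ((lambda1 ω₁ ω₂ * ω₂ - 2 * Real.pi * I) / ω₁ * (z + ω₂ / 2)) =
      exp ((ω₂ - Real.pi * I / ω₁) * (2 * z + ω₂)) * exp (bconst ω₁ ω₂ * z ^ 2) := by
    rw [← exp_add, ← exp_add, bconst]
    congr 1
    field
  simp only [sigmaStar, wSigma_add_right h]
  linear_combination -wSigma ω₁ ω₂ z * hexp

/-- The function `|σ_*(z)| e^{-|z|²}`: the modulus of the pseudopolynomial with root `0`, and
the exponential of the Green function with pole `0` up to normalization. -/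
noncomputable def sigmaModulus (ω₁ ω₂ z : ℂ) : ℝ := ‖sigmaStar ω₁ ω₂ z‖ * Real.exp (-‖z‖ ^ 2)

lemma sigmaModulus_nonneg (ω₁ ω₂ z : ℂ) : 0 ≤ sigmaModulus ω₁ ω₂ z := by
  unfold sigmaModulus
  positivity

lemma norm_pseudoPoly (ω₁ ω₂ α z : ℂ) :
    ‖pseudoPoly ω₁ ω₂ α z‖ = sigmaModulus ω₁ ω₂ (z - α) := by
  rw [pseudoPoly, sigmaModulus, norm_mul, norm_mul, norm_exp (-_), ← ofReal_neg, ofReal_re,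
    mul_right_comm, ← ofReal_ofNat, ← ofReal_mul, norm_exp_ofReal_mul_I, one_mul, mul_comm]

lemma Utorus_eq_log_sigmaModulus_sub (ω₁ ω₂ : ℂ) {z w : ℂ} (h : 0 < sigmaModulus ω₁ ω₂ (z - w)) :
    Utorus ω₁ ω₂ z w = Real.log (sigmaModulus ω₁ ω₂ (z - w)) - Aconst ω₁ ω₂ := by
  have hne : ‖sigmaStar ω₁ ω₂ (z - w)‖ ≠ 0 := left_ne_zero_of_mul h.ne'
  rw [Utorus, sigmaModulus, Real.log_mul hne (Real.exp_ne_zero _), Real.log_exp, ← sub_eq_add_neg]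

lemma periodic_sigmaModulus {ω₁ ω₂ ω : ℂ}
    (h : ∀ z, sigmaStar ω₁ ω₂ (z + ω) = -exp (conj ω * (2 * z + ω)) * sigmaStar ω₁ ω₂ z) :
    Function.Periodic (sigmaModulus ω₁ ω₂) ω := fun z => by
  have hsq : (conj ω * (2 * z + ω)).re - ‖z + ω‖ ^ 2 = -‖z‖ ^ 2 := by
    simp only [← normSq_eq_norm_sq, normSq_apply, mul_re, add_re, add_im, mul_im, conj_re,
      conj_im, re_ofNat, im_ofNat]
    ring
  rw [sigmaModulus, sigmaModulus, h, norm_mul, norm_neg, norm_exp, mul_right_comm, ← Real.exp_add,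
    ← sub_eq_add_neg, hsq, mul_comm]

lemma eq_ofReal_of_mul_im_eq {ω₁ ω₂ : ℂ} (harea : ω₁ * ω₂.im = Real.pi / 2) :
    ω₁ = (Real.pi / 2 / ω₂.im : ℝ) := by
  have hne : ω₁ * ω₂.im ≠ 0 := by simp [harea]
  push_cast
  exact eq_div_of_mul_eq (right_ne_zero_of_mul hne) harea

lemma im_div_pos_of_mul_im_eq {ω₁ ω₂ : ℂ} (harea : ω₁ * ω₂.im = Real.pi / 2) :
    0 < (ω₂ / ω₁).im := by
  have hne : ω₁ * ω₂.im ≠ 0 := by simp [harea]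
  have him : ω₂.im ≠ 0 := ofReal_ne_zero.1 (right_ne_zero_of_mul hne)
  rw [eq_ofReal_of_mul_im_eq harea, div_ofReal_im, div_div_eq_mul_div, ← sq]
  positivity

lemma periodic_sigmaModulus_left {ω₁ ω₂ : ℂ} (harea : ω₁ * ω₂.im = Real.pi / 2) :
    Function.Periodic (sigmaModulus ω₁ ω₂) ω₁ := by
  have hconj : conj ω₁ = ω₁ := by
    rw [eq_ofReal_of_mul_im_eq harea, conj_ofReal]
  exact periodic_sigmaModulus fun z =>
    hconj.symm ▸ sigmaStar_add_left (im_div_pos_of_mul_im_eq harea) z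

lemma periodic_sigmaModulus_right {ω₁ ω₂ : ℂ} (harea : ω₁ * ω₂.im = Real.pi / 2) :
    Function.Periodic (sigmaModulus ω₁ ω₂) ω₂ := by
  have h := im_div_pos_of_mul_im_eq harea
  have hconj : ω₂ - Real.pi * I / ω₁ = conj ω₂ := by
    have hsub := sub_conj ω₂
    push_cast at hsub
    rw [sub_eq_iff_eq_add, ← sub_eq_iff_eq_add', eq_div_iff (ne_zero_of_im_div_ne_zero h.ne')]
    linear_combination 2 * I * harea + ω₁ * hsub
  exact periodic_sigmaModulus fun z => hconj ▸ sigmaStar_add_right h z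

variable (L : PeriodPair)

lemma continuous_sigmaModulus : Continuous (sigmaModulus L.ω₁ L.ω₂) := by
  have hσ : Continuous (wSigma L.ω₁ L.ω₂) := (differentiable_wSigma L).continuous
  unfold sigmaModulus sigmaStar
  fun_prop

lemma ae_sigmaModulus_sub_pos (w : ℂ) : ∀ᵐ z, 0 < sigmaModulus L.ω₁ L.ω₂ (z - w) := by
  have hcount := (countable_latticeSet L.ω₁ L.ω₂).preimage (sub_left_injective (b := w))
  filter_upwards [hcount.ae_notMem volume] with z hz
  have hσ : wSigma L.ω₁ L.ω₂ (z - w) ≠ 0 := wSigma_ne_zero L hz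
  exact mul_pos (norm_pos_iff.2 (mul_ne_zero (exp_ne_zero _) hσ)) (Real.exp_pos _)

end SigmaModulus

section PeriodicIntegrals

open scoped Pointwise

lemma periodic_of_mem_span_int {E κ F : Type*} [AddCommGroup E] {b : κ → E} {f : E → F}
    (hf : ∀ i, Function.Periodic f (b i)) {v : E} (hv : v ∈ Submodule.span ℤ (Set.range b)) :
    Function.Periodic f v := by
  induction hv using Submodule.span_induction with
  | mem _ hx =>
    obtain ⟨i, rfl⟩ := hx
    exact hf i
  | zero => exact fun z => by rw [add_zero]
  | add _ _ _ _ hx hy => exact hx.add_period hy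
  | smul n _ _ hx => exact hx.zsmul n

variable {E ι : Type*} [NormedAddCommGroup E] [NormedSpace ℝ E] [FiniteDimensional ℝ E]
  [MeasurableSpace E] [BorelSpace E] (μ : Measure E) [μ.IsAddHaarMeasure]
  {κ : Type*} (b : Module.Basis κ ℝ E)

lemma setIntegral_fundamentalDomain_comp_sub {F : Type*} [NormedAddCommGroup F] [NormedSpace ℝ F]
    {f : E → F} (hf : ∀ i, Function.Periodic f (b i)) (a : E) :
    ∫ x in ZSpan.fundamentalDomain b, f (x - a) ∂μ = ∫ x in ZSpan.fundamentalDomain b, f x ∂μ := by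
  have : Finite κ := Module.Finite.finite_basis b
  have : Countable (Submodule.span ℤ (Set.range b)).toAddSubgroup :=
    inferInstanceAs (Countable (Submodule.span ℤ (Set.range b)))
  have hD := ZSpan.isAddFundamentalDomain' b μ
  have hinv (v : (Submodule.span ℤ (Set.range b)).toAddSubgroup) (x : E) :
      f ((v +ᵥ x) - a) = f (x - a) := by
    rw [AddSubgroup.vadd_def, vadd_eq_add, add_comm, add_sub_right_comm,
      periodic_of_mem_span_int hf v.2]
  have hpreimage : a +ᵥ ZSpan.fundamentalDomain b = (· - a) ⁻¹' ZSpan.fundamentalDomain b := by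
    ext x
    rw [Set.mem_vadd_set_iff_neg_vadd_mem, Set.mem_preimage, vadd_eq_add, neg_add_eq_sub]
  rw [hD.setIntegral_eq (hD.vadd_of_comm a) (f := fun x => f (x - a)) hinv, hpreimage,
    (measurePreserving_sub_right μ a).setIntegral_preimage_emb (measurableEmbedding_subRight a)]

lemma integrableOn_fundamentalDomain {F : Type*} [NormedAddCommGroup F] {f : E → F}
    (hf : Continuous f) : IntegrableOn f (ZSpan.fundamentalDomain b) μ := by
  have : Finite κ := Module.Finite.finite_basis b
  exact (hf.continuousOn.integrableOn_compact
    (ZSpan.fundamentalDomain_isBounded b).isCompact_closure).mono_set subset_closure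

lemma prod_rpow_le_sum_rpow [Fintype ι] [Nonempty ι] {x : ι → ℝ} (hx : ∀ j, 0 ≤ x j) (β : ℝ) :
    (∏ j, x j) ^ β ≤ ∑ j, (Fintype.card ι : ℝ)⁻¹ * x j ^ (β * Fintype.card ι) := by
  have hcard : (Fintype.card ι : ℝ) ≠ 0 := Nat.cast_ne_zero.2 Fintype.card_ne_zero
  rw [← Real.finsetProd_rpow _ _ fun j _ => hx j]
  have hamgm := Real.geom_mean_le_arith_mean_weighted Finset.univ
    (fun _ => (Fintype.card ι : ℝ)⁻¹) (fun j => x j ^ (β * Fintype.card ι))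
    (fun _ _ => by positivity) (by simp [hcard]) (fun j _ => Real.rpow_nonneg (hx j) _)
  simpa only [← Real.rpow_mul (hx _), mul_inv_cancel_right₀ hcard] using hamgm

lemma setIntegral_prod_comp_sub_rpow_le [Fintype ι] [Nonempty ι] {g : E → ℝ} (hg : Continuous g)
    (hg0 : ∀ x, 0 ≤ g x) (hper : ∀ i, Function.Periodic g (b i)) (a : ι → E) {β : ℝ}
    (hβ : 0 ≤ β) :
    ∫ x in ZSpan.fundamentalDomain b, (∏ j, g (x - a j)) ^ β ∂μ ≤
      ∫ x in ZSpan.fundamentalDomain b, g x ^ (β * Fintype.card ι) ∂μ := by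
  set n : ℝ := (Fintype.card ι : ℝ)
  have hn : n ≠ 0 := Nat.cast_ne_zero.2 Fintype.card_ne_zero
  have hβn : 0 ≤ β * n := by positivity
  have hshift (j : ι) : Continuous fun x => g (x - a j) := by fun_prop
  have hint (j : ι) : IntegrableOn (fun x => n⁻¹ * g (x - a j) ^ (β * n))
      (ZSpan.fundamentalDomain b) μ :=
    integrableOn_fundamentalDomain μ b
      (continuous_const.mul ((hshift j).rpow_const fun _ => .inr hβn))
  have hprod : IntegrableOn (fun x => (∏ j, g (x - a j)) ^ β) (ZSpan.fundamentalDomain b) μ :=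
    integrableOn_fundamentalDomain μ b
      ((continuous_finsetProd _ fun j _ => hshift j).rpow_const fun _ => .inr hβ)
  have hpow (i : κ) : Function.Periodic (fun x => g x ^ (β * n)) (b i) := fun x => by
    simp only [hper i x]
  calc ∫ x in ZSpan.fundamentalDomain b, (∏ j, g (x - a j)) ^ β ∂μ
    _ ≤ ∫ x in ZSpan.fundamentalDomain b, ∑ j, n⁻¹ * g (x - a j) ^ (β * n) ∂μ :=
      integral_mono hprod (integrable_finsetSum _ fun j _ => hint j) fun x =>
        prod_rpow_le_sum_rpow (fun _ => hg0 _) β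
    _ = ∑ _j : ι, n⁻¹ * ∫ x in ZSpan.fundamentalDomain b, g x ^ (β * n) ∂μ := by
      rw [integral_finsetSum _ fun j _ => hint j]
      refine Finset.sum_congr rfl fun j _ => ?_
      rw [integral_const_mul, setIntegral_fundamentalDomain_comp_sub μ b hpow]
    _ = ∫ x in ZSpan.fundamentalDomain b, g x ^ (β * n) ∂μ := by
      rw [Finset.sum_const, Finset.card_univ, nsmul_eq_mul, mul_inv_cancel_left₀ hn]

end PeriodicIntegrals

section Torus

variable (L : PeriodPair)

lemma fundDomain_eq_fundamentalDomain :
    fundDomain L.ω₁ L.ω₂ = ZSpan.fundamentalDomain L.basis := by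
  ext z
  rw [ZSpan.mem_fundamentalDomain]
  constructor
  · rintro ⟨⟨s, t⟩, ⟨hs, ht⟩, rfl⟩
    have hsum : (s : ℂ) * L.ω₁ + (t : ℂ) * L.ω₂ = ∑ i, ![s, t] i • L.basis i := by
      simp [Fin.sum_univ_two]
    simp only [hsum, Module.Basis.repr_sum_self]
    exact Fin.forall_fin_two.2 ⟨hs, ht⟩
  · intro hz
    refine ⟨(L.basis.repr z 0, L.basis.repr z 1), ⟨hz 0, hz 1⟩, ?_⟩
    simpa [Fin.sum_univ_two] using L.basis.sum_repr z

lemma setIntegral_prod_sigmaModulus_sub_rpow {ι : Type*} [Fintype ι] (s : Set ℂ) (w : ι → ℂ)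
    (β : ℝ) :
    ∫ z in s, (∏ j, sigmaModulus L.ω₁ L.ω₂ (z - w j)) ^ β =
      Real.exp (Fintype.card ι * β * Aconst L.ω₁ L.ω₂) *
        ∫ z in s, Real.exp (∑ j, β * Utorus L.ω₁ L.ω₂ z (w j)) := by
  rw [← integral_const_mul]
  have hpos : ∀ᵐ z, ∀ j, 0 < sigmaModulus L.ω₁ L.ω₂ (z - w j) :=
    ae_all_iff.2 fun j => ae_sigmaModulus_sub_pos L (w j)
  refine integral_congr_ae ?_
  filter_upwards [ae_restrict_of_ae hpos] with z hz
  have hlog : ∑ j, β * Utorus L.ω₁ L.ω₂ z (w j) =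
      β * Real.log (∏ j, sigmaModulus L.ω₁ L.ω₂ (z - w j)) -
        Fintype.card ι * β * Aconst L.ω₁ L.ω₂ := by
    simp only [Utorus_eq_log_sigmaModulus_sub _ _ (hz _)]
    rw [Real.log_prod fun j _ => (hz j).ne', ← Finset.mul_sum, Finset.sum_sub_distrib,
      Finset.sum_const, Finset.card_univ, nsmul_eq_mul]
    ring
  rw [← Real.exp_add, hlog, add_sub_cancel, mul_comm, Real.rpow_def_of_pos]
  exact Finset.prod_pos fun j _ => hz j

lemma setIntegral_sigmaModulus_rpow (γ : ℝ) :
    ∫ z in fundDomain L.ω₁ L.ω₂, sigmaModulus L.ω₁ L.ω₂ z ^ γ =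
      Real.pi / 2 * Real.exp (γ * Aconst L.ω₁ L.ω₂) * Etorus L.ω₁ L.ω₂ γ := by
  have h := setIntegral_prod_sigmaModulus_sub_rpow L (fundDomain L.ω₁ L.ω₂) (fun _ : Unit => 0) γ
  simp only [Finset.univ_unique, Finset.prod_singleton, Finset.sum_singleton, Fintype.card_unit,
    Nat.cast_one, one_mul, sub_zero] at h
  rw [h, Etorus]
  field_simp [Real.pi_ne_zero]

lemma ThetaTorus_le (ω₁ ω₂ : ℂ) {N : ℕ} (β : ℝ) (w : Fin N → ℂ) :
    ThetaTorus ω₁ ω₂ N β ≤ 2 / Real.pi *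
      ∫ z in fundDomain ω₁ ω₂, Real.exp (∑ j, β * Utorus ω₁ ω₂ z (w j)) := by
  refine ciInf_le ⟨0, ?_⟩ w
  rintro _ ⟨v, rfl⟩
  positivity

lemma ThetaTorus_le_setIntegral_prod_sigmaModulus_sub_rpow {N : ℕ} (β : ℝ) (w : Fin N → ℂ) :
    Real.pi / 2 * Real.exp (N * β * Aconst L.ω₁ L.ω₂) * ThetaTorus L.ω₁ L.ω₂ N β ≤
      ∫ z in fundDomain L.ω₁ L.ω₂, (∏ j, sigmaModulus L.ω₁ L.ω₂ (z - w j)) ^ β := by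
  calc Real.pi / 2 * Real.exp (N * β * Aconst L.ω₁ L.ω₂) * ThetaTorus L.ω₁ L.ω₂ N β
    _ ≤ Real.pi / 2 * Real.exp (N * β * Aconst L.ω₁ L.ω₂) * (2 / Real.pi *
          ∫ z in fundDomain L.ω₁ L.ω₂, Real.exp (∑ j, β * Utorus L.ω₁ L.ω₂ z (w j))) := by
      gcongr
      exact ThetaTorus_le L.ω₁ L.ω₂ β w
    _ = _ := by
      rw [setIntegral_prod_sigmaModulus_sub_rpow, Fintype.card_fin]
      field_simp

end Torus

/-- `L^β` quasi-norm estimates for the monic pseudopolynomial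
`Π_𝛂 = π_{α₁} ⋯ π_{α_N}` over a fundamental domain of the lattice. -/
theorem pseudoPoly_Lbeta_bounds (ω₁ ω₂ : ℂ)
    (h1 : ω₁.im = 0) (h1' : 0 < ω₁.re) (h2 : 0 < ω₂.im)
    (harea : ω₁.re * ω₂.im = Real.pi / 2)
    (N : ℕ) (hN : 1 ≤ N) (α : Fin N → ℂ) (β : ℝ) (hβ : 0 < β) :
    Real.pi / 2 * Real.exp ((N : ℝ) * β * Aconst ω₁ ω₂) * ThetaTorus ω₁ ω₂ N β ≤
      (∫ z in fundDomain ω₁ ω₂, ‖∏ j, pseudoPoly ω₁ ω₂ (α j) z‖ ^ β) ∧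
    (∫ z in fundDomain ω₁ ω₂, ‖∏ j, pseudoPoly ω₁ ω₂ (α j) z‖ ^ β) ≤
      Real.pi / 2 * Real.exp ((N : ℝ) * β * Aconst ω₁ ω₂) * Etorus ω₁ ω₂ (β * N) := by
  have hcovol : ω₁ * ω₂.im = Real.pi / 2 := by
    apply Complex.ext <;> simp [h1, harea]
  let L : PeriodPair := ⟨ω₁, ω₂, linearIndependent_pair_of_im_div_ne_zero
    (im_div_pos_of_mul_im_eq hcovol).ne'⟩
  have hper (i : Fin 2) : Function.Periodic (sigmaModulus ω₁ ω₂) (L.basis i) := by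
    fin_cases i
    · simpa using periodic_sigmaModulus_left hcovol
    · simpa using periodic_sigmaModulus_right hcovol
  have : NeZero N := ⟨Nat.one_le_iff_ne_zero.1 hN⟩
  simp only [norm_prod, norm_pseudoPoly]
  refine ⟨ThetaTorus_le_setIntegral_prod_sigmaModulus_sub_rpow L β α, ?_⟩
  have hle := setIntegral_prod_comp_sub_rpow_le volume L.basis (continuous_sigmaModulus L)
    (sigmaModulus_nonneg ω₁ ω₂) hper α hβ.le
  rw [Fintype.card_fin, ← fundDomain_eq_fundamentalDomain, setIntegral_sigmaModulus_rpow] at hle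
  rwa [mul_comm (N : ℝ) β]
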